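/- Let p > 1 and μ ∈ 𝒲_p(ℝ²). Then the following are equivalent: (i) μ is a Dirac mass, i.e. μ = δ_x for some x ∈ ℝ²; (ii) for every ν ∈ 𝒲_p(ℝ²) there exists η ∈ 𝒲_p(ℝ²) such that d_{W_p}(μ, ν) = d_{W_p}(ν, η) = (1/2)·d_{W_p}(μ, η). -/

import Mathlib

open MeasureTheory

/-- The `p`-Wasserstein distance between two measures, defined as the infimum over all
couplings `π` of `μ` and `ν` of `(∬ d(x,y)^p dπ)^(1/p)`. -/
noncomputable def Wdist {X : Type*} [MeasurableSpace X] [PseudoMetricSpace X] (p : ℝ)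
    (μ ν : Measure X) : ℝ :=
  (⨅ π ∈ {π : Measure (X × X) | π.map Prod.fst = μ ∧ π.map Prod.snd = ν},
    (∫⁻ q, edist q.1 q.2 ^ p ∂π) ^ (1 / p)).toReal

/-- The `p`-Wasserstein space over `X`: Borel probability measures on `X` with finite
`p`-th moment. -/
def WSet (X : Type*) [MeasurableSpace X] [PseudoMetricSpace X] (p : ℝ) : Set (Measure X) :=
  {μ | IsProbabilityMeasure μ ∧ ∃ x₀ : X, ∫⁻ x, edist x x₀ ^ p ∂μ < ⊤}

/-- An isometry of the underlying metric space: a distance-preserving bijection. -/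
def IsIsom {X : Type*} [PseudoMetricSpace X] (T : X → X) : Prop :=
  Function.Bijective T ∧ ∀ x y, dist (T x) (T y) = dist x y

/-- An isometry of the `p`-Wasserstein space over `X`: a bijection of the space of
probability measures with finite `p`-th moment preserving the Wasserstein distance. -/
def IsWIsometry (X : Type*) [MeasurableSpace X] [PseudoMetricSpace X] (p : ℝ)
    (Φ : Measure X → Measure X) : Prop :=
  Set.BijOn Φ (WSet X p) (WSet X p) ∧
    ∀ μ ∈ WSet X p, ∀ ν ∈ WSet X p, Wdist p (Φ μ) (Φ ν) = Wdist p μ ν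

/-- The (topological) support of a measure. -/
def msupport {X : Type*} [TopologicalSpace X] [MeasurableSpace X] (μ : Measure X) : Set X :=
  {x | ∀ U : Set X, IsOpen U → x ∈ U → μ U ≠ 0}

def diagLine (ε a : ℝ) : Set (ℝ × ℝ) := {z | z.2 = ε * z.1 + a}

def Lplus : Set (ℝ × ℝ) := {z | z.2 = z.1}

def Lminus : Set (ℝ × ℝ) := {z | z.2 = -z.1}

/-- The closed square `Q = [-1,1]²`. -/
abbrev Qs : Set (ℝ × ℝ) := Set.Icc (-1, -1) (1, 1)

def LplusQ : Set ↥Qs := {q | (q : ℝ × ℝ).2 = (q : ℝ × ℝ).1}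

def LminusQ : Set ↥Qs := {q | (q : ℝ × ℝ).2 = -(q : ℝ × ℝ).1}

open ProbabilityTheory
open scoped ENNReal NNReal

/-!
If `μ = δ_x`, then pushing `ν` forward along the homothety `T` of centre `x` and ratio `2` gives a
symmetric point, because `T` moves each `y` by exactly `d(y, x)` and doubles its distance to `x`.

Conversely, let `η` be a symmetric point of `μ` with respect to `δ_y`, where `y` lies in the
support of `μ`. Then `W_p(μ, η)` is as large as the bound
`d(x, z)^p ≤ (d(x, y) + d(z, y))^p ≤ 2^(p-1) (d(x, y)^p + d(z, y)^p)`
allows for any coupling, so equality holds almost everywhere for the product coupling. As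
`t ↦ t^p` is strictly convex, `d(x, y) = d(z, y)` for `μ ⊗ η`-almost all `(x, z)`: `μ` is
concentrated on a sphere around `y`, and the radius is `0` as `y` is in the support.
-/

theorem ennreal_rpow_add_lt_mul_rpow_add_rpow {p : ℝ} (hp : 1 < p) {a b : ℝ≥0∞} (ha : a ≠ ∞)
    (hb : b ≠ ∞) (hab : a ≠ b) : (a + b) ^ p < 2 ^ (p - 1) * (a ^ p + b ^ p) := by
  lift a to ℝ≥0 using ha
  lift b to ℝ≥0 using hb
  have hne : (a : ℝ) ≠ b := by simpa using hab
  have hmid : ((a : ℝ) / 2 + b / 2) ^ p < (a : ℝ) ^ p / 2 + (b : ℝ) ^ p / 2 := by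
    simpa [div_eq_inv_mul] using (strictConvexOn_rpow hp).2 a.2 b.2 hne one_half_pos one_half_pos
      (add_halves 1)
  have hreal : ((a : ℝ) + b) ^ p < 2 ^ (p - 1) * ((a : ℝ) ^ p + (b : ℝ) ^ p) := by
    rw [← add_div, ← add_div, Real.div_rpow (by positivity) zero_le_two,
      div_lt_iff₀ (by positivity)] at hmid
    rw [Real.rpow_sub_one two_ne_zero]
    linarith
  have hnn : (a + b) ^ p < 2 ^ (p - 1) * (a ^ p + b ^ p) := by exact_mod_cast hreal
  have h0 : 0 ≤ p := by linarith
  have h1 : 0 ≤ p - 1 := by linarith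
  simpa [ENNReal.coe_rpow_of_nonneg _ h0, ENNReal.coe_rpow_of_nonneg _ h1]
    using ENNReal.coe_lt_coe.2 hnn

theorem edist_rpow_le_mul_rpow_add_rpow {X : Type*} [PseudoEMetricSpace X] {p : ℝ} (hp : 1 ≤ p)
    (x y z : X) : edist x z ^ p ≤ 2 ^ (p - 1) * (edist x y ^ p + edist z y ^ p) :=
  (ENNReal.rpow_le_rpow (edist_triangle_right x z y) (by linarith)).trans
    (ENNReal.rpow_add_le_mul_rpow_add_rpow _ _ hp)

theorem exists_ae_eq_const_of_ae_prod_eq {α β γ : Type*} [MeasurableSpace α] [MeasurableSpace β]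
    {μ : Measure α} {ν : Measure β} [SFinite ν] [NeZero μ] [NeZero ν] {f : α → γ} {g : β → γ}
    (h : ∀ᵐ q ∂μ.prod ν, f q.1 = g q.2) : ∃ c, ∀ᵐ x ∂μ, f x = c := by
  have hae : ∀ᵐ x ∂μ, ∀ᵐ z ∂ν, f x = g z := Measure.ae_ae_of_ae_prod h
  obtain ⟨x₀, hx₀⟩ := hae.exists
  refine ⟨f x₀, hae.mono fun x hx ↦ ?_⟩
  obtain ⟨z, hxz, hx₀z⟩ := (hx.and hx₀).exists
  exact hxz.trans hx₀z.symm

theorem eq_dirac_of_ae_edist_eq {X : Type*} [MeasurableSpace X] [MetricSpace X] {μ : Measure X}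
    [IsProbabilityMeasure μ] {x : X} {c : ℝ≥0∞} (hx : x ∈ μ.support)
    (h : ∀ᵐ y ∂μ, edist y x = c) : μ = Measure.dirac x := by
  have hclosed : IsClosed {y | edist y x = c} := isClosed_eq (by fun_prop) continuous_const
  have hc : edist x x = c := Measure.support_subset_of_isClosed hclosed h hx
  have hae : (id : X → X) =ᵐ[μ] fun _ ↦ x :=
    h.mono fun y hy ↦ edist_eq_zero.1 (hy.trans (hc.symm.trans (edist_self x)))
  simpa using (hasLaw_dirac_of_ae_eq hae).map_eq

section Coupling

variable {α β : Type*} [MeasurableSpace α] [MeasurableSpace β] {μ : Measure α} {ν : Measure β}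
  {π : Measure (α × β)}

/-- `π` is a coupling (transport plan) of `μ` and `ν`: its marginals are `μ` and `ν`. -/
def IsCoupling (π : Measure (α × β)) (μ : Measure α) (ν : Measure β) : Prop :=
  π.map Prod.fst = μ ∧ π.map Prod.snd = ν

theorem isCoupling_prod (μ : Measure α) (ν : Measure β) [IsProbabilityMeasure μ]
    [IsProbabilityMeasure ν] : IsCoupling (μ.prod ν) μ ν := by
  simp [IsCoupling]

theorem isCoupling_map_prodMk (μ : Measure α) {T : α → β} (hT : Measurable T) :
    IsCoupling (μ.map fun x ↦ (x, T x)) μ (μ.map T) := by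
  have hm : Measurable fun x ↦ (x, T x) := measurable_id.prodMk hT
  exact ⟨(Measure.map_map measurable_fst hm).trans Measure.map_id,
    Measure.map_map measurable_snd hm⟩

theorem IsCoupling.swap (h : IsCoupling π μ ν) : IsCoupling (π.map Prod.swap) ν μ :=
  ⟨(Measure.map_map measurable_fst measurable_swap).trans h.2,
    (Measure.map_map measurable_snd measurable_swap).trans h.1⟩

theorem IsCoupling.lintegral_fst (h : IsCoupling π μ ν) {f : α → ℝ≥0∞} (hf : Measurable f) :
    ∫⁻ q, f q.1 ∂π = ∫⁻ x, f x ∂μ := by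
  rw [← h.1, lintegral_map hf measurable_fst]

theorem IsCoupling.lintegral_snd (h : IsCoupling π μ ν) {f : β → ℝ≥0∞} (hf : Measurable f) :
    ∫⁻ q, f q.2 ∂π = ∫⁻ y, f y ∂ν := by
  rw [← h.2, lintegral_map hf measurable_snd]

end Coupling

section PseudoMetricSpace

variable {X : Type*} [MeasurableSpace X] [PseudoMetricSpace X] {p : ℝ} {μ ν η : Measure X}
  {π : Measure (X × X)}

/-- The `p`-th moment of `μ` about the point `x`. -/
noncomputable def distMoment (p : ℝ) (x : X) (μ : Measure X) : ℝ≥0∞ :=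
  ∫⁻ y, edist y x ^ p ∂μ

/-- The transport cost of the plan `π` for the cost function `d ^ p`. -/
noncomputable def transportCost (p : ℝ) (π : Measure (X × X)) : ℝ≥0∞ :=
  ∫⁻ q, edist q.1 q.2 ^ p ∂π

/-- The `p`-Wasserstein distance before conversion to `ℝ`, so that an infinite distance is not
confused with `0`. -/
noncomputable def eWdist (p : ℝ) (μ ν : Measure X) : ℝ≥0∞ :=
  ⨅ (π) (_ : IsCoupling π μ ν), transportCost p π ^ (1 / p)

/-- `η` is a symmetric point of `μ` with respect to `ν`: the measure `ν` is a metric midpoint of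
`μ` and `η` in the `p`-Wasserstein space. -/
def IsSymmetricPoint (p : ℝ) (μ ν η : Measure X) : Prop :=
  Wdist p μ ν = Wdist p ν η ∧ Wdist p ν η = (1 / 2) * Wdist p μ η

theorem Wdist_eq_toReal_eWdist : Wdist p μ ν = (eWdist p μ ν).toReal := rfl

theorem eWdist_le (h : IsCoupling π μ ν) : eWdist p μ ν ≤ transportCost p π ^ (1 / p) :=
  iInf₂_le π h

theorem le_eWdist {c : ℝ≥0∞} (h : ∀ π, IsCoupling π μ ν → c ≤ transportCost p π ^ (1 / p)) :
    c ≤ eWdist p μ ν :=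
  le_iInf₂ h

theorem transportCost_map_swap : transportCost p (π.map Prod.swap) = transportCost p π :=
  (lintegral_map_equiv _ MeasurableEquiv.prodComm).trans <|
    lintegral_congr fun q ↦ congrArg (· ^ p) (edist_comm q.2 q.1)

theorem eWdist_comm (p : ℝ) (μ ν : Measure X) : eWdist p μ ν = eWdist p ν μ := by
  have hle (μ ν : Measure X) : eWdist p μ ν ≤ eWdist p ν μ :=
    le_eWdist fun π hπ ↦ (eWdist_le hπ.swap).trans_eq (by rw [transportCost_map_swap])
  exact (hle μ ν).antisymm (hle ν μ)

theorem dirac_mem_WSet [OpensMeasurableSpace X] (hp : 0 < p) (x : X) :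
    Measure.dirac x ∈ WSet X p := by
  refine ⟨inferInstance, x, ?_⟩
  rw [lintegral_dirac' _ (by fun_prop), edist_self, ENNReal.zero_rpow_of_pos hp]
  exact ENNReal.zero_lt_top

theorem distMoment_ne_top (hp : 1 ≤ p) (hμ : μ ∈ WSet X p) (x : X) : distMoment p x μ ≠ ∞ := by
  obtain ⟨hprob, x₀, hx₀⟩ := hμ
  have hbound : distMoment p x μ ≤ 2 ^ (p - 1) * (distMoment p x₀ μ + edist x₀ x ^ p) :=
    calc distMoment p x μ
      _ ≤ ∫⁻ y, 2 ^ (p - 1) * (edist y x₀ ^ p + edist x₀ x ^ p) ∂μ := lintegral_mono fun y ↦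
          (ENNReal.rpow_le_rpow (edist_triangle y x₀ x) (by linarith)).trans
            (ENNReal.rpow_add_le_mul_rpow_add_rpow _ _ hp)
      _ = 2 ^ (p - 1) * (distMoment p x₀ μ + edist x₀ x ^ p) := by
          rw [lintegral_const_mul' _ _ (by finiteness), lintegral_add_right _ measurable_const,
            lintegral_const, measure_univ, mul_one, distMoment]
  have hx₀' : distMoment p x₀ μ ≠ ∞ := hx₀.ne
  exact ne_top_of_le_ne_top (by finiteness) hbound

section OpensMeasurableSpace

variable [OpensMeasurableSpace X]

theorem IsCoupling.lintegral_mul_rpow_add_rpow (h : IsCoupling π μ ν) (x : X) :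
    ∫⁻ q, 2 ^ (p - 1) * (edist q.1 x ^ p + edist q.2 x ^ p) ∂π =
      2 ^ (p - 1) * (distMoment p x μ + distMoment p x ν) := by
  have hf : Measurable fun y ↦ edist y x ^ p := by fun_prop
  have hf₁ : Measurable fun q : X × X ↦ edist q.1 x ^ p := hf.comp measurable_fst
  rw [lintegral_const_mul' _ _ (ENNReal.rpow_ne_top_of_ne_zero two_ne_zero ENNReal.ofNat_ne_top),
    lintegral_add_left hf₁, h.lintegral_fst hf, h.lintegral_snd hf, distMoment, distMoment]

theorem IsCoupling.transportCost_le (h : IsCoupling π μ ν) (hp : 1 ≤ p) (x : X) :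
    transportCost p π ≤ 2 ^ (p - 1) * (distMoment p x μ + distMoment p x ν) :=
  (lintegral_mono fun q : X × X ↦ edist_rpow_le_mul_rpow_add_rpow hp q.1 x q.2).trans_eq
    (h.lintegral_mul_rpow_add_rpow x)

theorem IsCoupling.transportCost_ne_top (h : IsCoupling π μ ν) (hp : 1 ≤ p) (hμ : μ ∈ WSet X p)
    (hν : ν ∈ WSet X p) : transportCost p π ≠ ∞ := by
  obtain ⟨x, -⟩ := hμ.2
  have hμx := distMoment_ne_top hp hμ x
  have hνx := distMoment_ne_top hp hν x
  exact ne_top_of_le_ne_top (by finiteness) (h.transportCost_le hp x)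

theorem IsCoupling.ae_edist_eq (h : IsCoupling π μ ν) (hp : 1 < p) {x : X}
    (hfin : transportCost p π ≠ ∞)
    (hmax : 2 ^ (p - 1) * (distMoment p x μ + distMoment p x ν) ≤ transportCost p π) :
    ∀ᵐ q ∂π, edist q.1 x = edist q.2 x := by
  have hae : (fun q ↦ edist q.1 q.2 ^ p) =ᵐ[π]
      fun q ↦ 2 ^ (p - 1) * (edist q.1 x ^ p + edist q.2 x ^ p) :=
    ae_eq_of_ae_le_of_lintegral_le
      (.of_forall fun q ↦ edist_rpow_le_mul_rpow_add_rpow hp.le q.1 x q.2)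
      hfin (by fun_prop) ((h.lintegral_mul_rpow_add_rpow x).trans_le hmax)
  filter_upwards [hae] with q hq
  by_contra hne
  have hlt := ennreal_rpow_add_lt_mul_rpow_add_rpow hp (edist_ne_top _ _) (edist_ne_top _ _) hne
  exact ((ENNReal.rpow_le_rpow (edist_triangle_right _ _ x) (by linarith)).trans_lt hlt).ne hq

theorem eWdist_ne_top (hp : 1 ≤ p) (hμ : μ ∈ WSet X p) (hν : ν ∈ WSet X p) :
    eWdist p μ ν ≠ ∞ := by
  have := hμ.1
  have := hν.1
  have hπ := isCoupling_prod μ ν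
  exact ne_top_of_le_ne_top
    (ENNReal.rpow_ne_top_of_nonneg (by positivity) (hπ.transportCost_ne_top hp hμ hν))
    (eWdist_le hπ)

theorem isSymmetricPoint_iff (hp : 1 ≤ p) (hμ : μ ∈ WSet X p) (hν : ν ∈ WSet X p)
    (hη : η ∈ WSet X p) : IsSymmetricPoint p μ ν η ↔
      eWdist p μ ν = eWdist p ν η ∧ eWdist p μ η = 2 * eWdist p ν η := by
  have hμν := eWdist_ne_top hp hμ hν
  have hνη := eWdist_ne_top hp hν hη
  have hμη := eWdist_ne_top hp hμ hη
  simp only [IsSymmetricPoint, Wdist_eq_toReal_eWdist]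
  rw [ENNReal.toReal_eq_toReal_iff' hμν hνη,
    ← ENNReal.toReal_eq_toReal_iff' hμη (by finiteness), ENNReal.toReal_mul, ENNReal.toReal_ofNat]
  grind

-- As one end is a Dirac measure, Minkowski's inequality in `L^p(π)` replaces gluing of plans.
theorem IsCoupling.distMoment_rpow_le [SecondCountableTopology X] (h : IsCoupling π μ ν)
    (hp : 1 ≤ p) (x : X) : distMoment p x ν ^ (1 / p) ≤
      distMoment p x μ ^ (1 / p) + transportCost p π ^ (1 / p) := by
  have hf : Measurable fun y ↦ edist y x ^ p := by fun_prop
  calc distMoment p x ν ^ (1 / p)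
    _ = (∫⁻ q, edist q.2 x ^ p ∂π) ^ (1 / p) := by rw [h.lintegral_snd hf, distMoment]
    _ ≤ (∫⁻ q, (edist q.1 x + edist q.1 q.2) ^ p ∂π) ^ (1 / p) := by
        gcongr with q
        rw [add_comm]
        exact edist_triangle_left _ _ _
    _ ≤ (∫⁻ q, edist q.1 x ^ p ∂π) ^ (1 / p) + transportCost p π ^ (1 / p) :=
        ENNReal.lintegral_Lp_add_le (by fun_prop) (by fun_prop) hp
    _ = distMoment p x μ ^ (1 / p) + transportCost p π ^ (1 / p) := by
        rw [h.lintegral_fst hf, distMoment]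

theorem eWdist_map_le [SecondCountableTopology X] {T : X → X} (hT : Measurable T) :
    eWdist p μ (μ.map T) ≤ (∫⁻ x, edist x (T x) ^ p ∂μ) ^ (1 / p) := by
  refine (eWdist_le (isCoupling_map_prodMk μ hT)).trans_eq ?_
  rw [transportCost, lintegral_map (by fun_prop) (by fun_prop)]

theorem distMoment_map_eq_mul {T : X → X} (hT : Measurable T) (hp : 0 ≤ p) {x : X} {c : ℝ≥0∞}
    (hTx : ∀ y, edist (T y) x = c * edist y x) :
    distMoment p x (μ.map T) = c ^ p * distMoment p x μ := by
  rw [distMoment, lintegral_map (by fun_prop) hT]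
  simp only [hTx, ENNReal.mul_rpow_of_nonneg _ _ hp]
  exact lintegral_const_mul _ (by fun_prop)

end OpensMeasurableSpace

end PseudoMetricSpace

section MetricSpace

variable {X : Type*} [MeasurableSpace X] [MetricSpace X] [OpensMeasurableSpace X] {p : ℝ}
  {μ ν η : Measure X}

theorem IsCoupling.transportCost_dirac_right {π : Measure (X × X)} {x : X}
    (h : IsCoupling π μ (Measure.dirac x)) : transportCost p π = distMoment p x μ := by
  have hsnd : ∀ᵐ q ∂π, q.2 = x :=
    HasLaw.ae_eq_of_dirac (X := Prod.snd) ⟨measurable_snd.aemeasurable, h.2⟩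
  rw [transportCost, distMoment, ← h.lintegral_fst (by fun_prop)]
  exact lintegral_congr_ae (hsnd.mono fun q hq ↦ by simp only [hq])

theorem eWdist_dirac_right (p : ℝ) (μ : Measure X) [IsProbabilityMeasure μ] (x : X) :
    eWdist p μ (Measure.dirac x) = distMoment p x μ ^ (1 / p) :=
  le_antisymm
    ((eWdist_le (isCoupling_prod _ _)).trans_eq
      (by rw [(isCoupling_prod _ _).transportCost_dirac_right]))
    (le_eWdist fun π hπ ↦ by rw [hπ.transportCost_dirac_right])

theorem eWdist_dirac_left (p : ℝ) (μ : Measure X) [IsProbabilityMeasure μ] (x : X) :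
    eWdist p (Measure.dirac x) μ = distMoment p x μ ^ (1 / p) := by
  rw [eWdist_comm, eWdist_dirac_right]

theorem IsSymmetricPoint.ae_prod_edist_eq (hp : 1 < p) (hμ : μ ∈ WSet X p) (hη : η ∈ WSet X p)
    {x : X} (h : IsSymmetricPoint p μ (Measure.dirac x) η) :
    ∀ᵐ q ∂μ.prod η, edist q.1 x = edist q.2 x := by
  have hp0 : 0 < p := by linarith
  have := hμ.1
  have := hη.1
  have hπ := isCoupling_prod μ η
  obtain ⟨heq, hdouble⟩ := (isSymmetricPoint_iff hp.le hμ (dirac_mem_WSet hp0 x) hη).1 h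
  rw [eWdist_dirac_right, eWdist_dirac_left] at heq
  have hmoment : distMoment p x μ = distMoment p x η :=
    ENNReal.rpow_left_injective (by positivity) heq
  refine hπ.ae_edist_eq hp (hπ.transportCost_ne_top hp.le hμ hη) ?_
  calc 2 ^ (p - 1) * (distMoment p x μ + distMoment p x η)
    _ = 2 ^ p * distMoment p x η := by
        rw [hmoment, ← two_mul, ← mul_assoc]
        congr 1
        nth_rw 2 [← ENNReal.rpow_one 2]
        rw [← ENNReal.rpow_add _ _ two_ne_zero ENNReal.ofNat_ne_top, sub_add_cancel]
    _ = eWdist p μ η ^ p := by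
        rw [hdouble, eWdist_dirac_left, ENNReal.mul_rpow_of_nonneg _ _ hp0.le, one_div,
          ENNReal.rpow_inv_rpow hp0.ne']
    _ ≤ transportCost p (μ.prod η) := by
        rw [← ENNReal.le_rpow_inv_iff hp0, ← one_div]
        exact eWdist_le hπ

variable [SecondCountableTopology X]

theorem eWdist_dirac_triangle [IsProbabilityMeasure μ] [IsProbabilityMeasure ν] (hp : 1 ≤ p)
    (x : X) : eWdist p (Measure.dirac x) ν ≤ eWdist p (Measure.dirac x) μ + eWdist p μ ν := by
  rw [eWdist_dirac_left, eWdist_dirac_left, ← tsub_le_iff_left]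
  exact le_eWdist fun π hπ ↦ tsub_le_iff_left.2 (hπ.distMoment_rpow_le hp x)

theorem exists_isSymmetricPoint_dirac (hp : 1 ≤ p) {x : X} {T : X → X} (hT : Measurable T)
    (hTself : ∀ y, edist y (T y) = edist y x) (hTx : ∀ y, edist (T y) x = 2 * edist y x)
    (hν : ν ∈ WSet X p) : ∃ η ∈ WSet X p, IsSymmetricPoint p (Measure.dirac x) ν η := by
  have hp0 : 0 < p := by linarith
  have := hν.1
  have : IsProbabilityMeasure (ν.map T) := Measure.isProbabilityMeasure_map hT.aemeasurable
  have hνx := distMoment_ne_top hp hν x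
  have hmoment : distMoment p x (ν.map T) = 2 ^ p * distMoment p x ν :=
    distMoment_map_eq_mul hT hp0.le hTx
  have hη : ν.map T ∈ WSet X p :=
    ⟨this, x, show distMoment p x (ν.map T) < ∞ by rw [hmoment]; finiteness⟩
  have hdouble : eWdist p (Measure.dirac x) (ν.map T) = 2 * eWdist p (Measure.dirac x) ν := by
    rw [eWdist_dirac_left, eWdist_dirac_left, hmoment,
      ENNReal.mul_rpow_of_nonneg _ _ (by positivity), one_div, ENNReal.rpow_rpow_inv hp0.ne']
  have hle : eWdist p ν (ν.map T) ≤ eWdist p (Measure.dirac x) ν := by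
    refine (eWdist_map_le hT).trans_eq ?_
    rw [eWdist_dirac_left, distMoment]
    simp only [hTself]
  have hge : eWdist p (Measure.dirac x) ν ≤ eWdist p ν (ν.map T) := by
    have htri := eWdist_dirac_triangle (μ := ν) (ν := ν.map T) hp x
    rw [hdouble, two_mul] at htri
    exact (ENNReal.add_le_add_iff_left (eWdist_ne_top hp (dirac_mem_WSet hp0 x) hν)).1 htri
  refine ⟨ν.map T, hη, (isSymmetricPoint_iff hp (dirac_mem_WSet hp0 x) hν hη).2 ?_⟩
  rw [hdouble, hge.antisymm hle]
  exact ⟨rfl, rfl⟩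

theorem exists_eq_dirac_of_forall_exists_isSymmetricPoint (hp : 1 < p) (hμ : μ ∈ WSet X p)
    (h : ∀ x, ∃ η ∈ WSet X p, IsSymmetricPoint p μ (Measure.dirac x) η) :
    ∃ x, μ = Measure.dirac x := by
  have := hμ.1
  obtain ⟨x, hx⟩ := Measure.nonempty_support (IsProbabilityMeasure.ne_zero μ)
  obtain ⟨η, hη, hsymm⟩ := h x
  have := hη.1
  obtain ⟨c, hc⟩ := exists_ae_eq_const_of_ae_prod_eq (f := (edist · x)) (g := (edist · x))
    (hsymm.ae_prod_edist_eq hp hμ hη)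
  exact ⟨x, eq_dirac_of_ae_edist_eq hx hc⟩

end MetricSpace

theorem edist_self_homothety_two {E : Type*} [SeminormedAddCommGroup E] [NormedSpace ℝ E]
    (x y : E) : edist y (AffineMap.homothety x (2 : ℝ) y) = edist y x := by
  rw [edist_dist, edist_dist, dist_self_homothety, dist_comm]
  norm_num

theorem edist_homothety_two_center {E : Type*} [SeminormedAddCommGroup E] [NormedSpace ℝ E]
    (x y : E) : edist (AffineMap.homothety x (2 : ℝ) y) x = 2 * edist y x := by
  rw [edist_dist, edist_dist, dist_homothety_center, dist_comm, Real.norm_ofNat,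
    ENNReal.ofReal_mul zero_le_two, ENNReal.ofReal_ofNat]

theorem dirac_characterization_general {E : Type*} [NormedAddCommGroup E] [NormedSpace ℝ E]
    [SecondCountableTopology E] [MeasurableSpace E] [BorelSpace E] {p : ℝ} (hp : 1 < p)
    {μ : Measure E} (hμ : μ ∈ WSet E p) :
    (∃ x : E, μ = Measure.dirac x) ↔
      ∀ ν ∈ WSet E p, ∃ η ∈ WSet E p, Wdist p μ ν = Wdist p ν η ∧
        Wdist p ν η = (1 / 2) * Wdist p μ η := by
  refine ⟨?_, fun h ↦ exists_eq_dirac_of_forall_exists_isSymmetricPoint hp hμ fun x ↦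
    h _ (dirac_mem_WSet (by linarith) x)⟩
  rintro ⟨x, rfl⟩ ν hν
  exact exists_isSymmetricPoint_dirac hp.le (AffineMap.homothety_continuous x 2).measurable
    (edist_self_homothety_two x) (edist_homothety_two_center x) hν

/-- For `p > 1`, a measure `μ ∈ 𝒲_p(ℝ², d_m)` is a Dirac mass if and only if it admits
a symmetric point with respect to every other measure. -/
theorem dirac_characterization (p : ℝ) (hp : 1 < p) (μ : Measure (ℝ × ℝ))
    (hμ : μ ∈ WSet (ℝ × ℝ) p) :
    (∃ x : ℝ × ℝ, μ = Measure.dirac x) ↔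
    (∀ ν ∈ WSet (ℝ × ℝ) p, ∃ η ∈ WSet (ℝ × ℝ) p,
      Wdist p μ ν = Wdist p ν η ∧ Wdist p ν η = (1 / 2) * Wdist p μ η) := by
  exact dirac_characterization_general hp hμ
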